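/- Let f : X → S be locally of finite type with S locally Noetherian. The functor Hilb^1_X (of closed sections, equivalently closed subschemes flat and finite of rank one over the base) is representable by a scheme if and only if f is separated; and in the separated case it is represented by X itself. -/

import Mathlib

open AlgebraicGeometry CategoryTheory CategoryTheory.Limits

/-- `h : T ⟶ X` is a closed section of `X ×_S T ⟶ T`:
the induced section `(h, 𝟙 T) : T ⟶ X ×_S T` is a closed immersion. -/
def IsClosedSectionOver {X S T : Scheme} (f : X ⟶ S) (g : T ⟶ S) (h : T ⟶ X) : Prop :=
  ∃ w : h ≫ f = 𝟙 T ≫ g, IsClosedImmersion (pullback.lift h (𝟙 T) w)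

/-- The `T`-valued points of the Hilbert functor of one point of `X` over `S`:
closed sections of `X ×_S T ⟶ T`, identified with the corresponding
`S`-morphisms `T ⟶ X`. -/
def Hilb1Set {X S : Scheme} (f : X ⟶ S) (T : Over S) : Type :=
  {h : T.left ⟶ X // IsClosedSectionOver f T.hom h}

/-! A representing object `H` of `Hilb¹_X` is the same thing as a monomorphism `u : H ⟶ X` through
which exactly the closed sections factor. Over a discrete base every section is closed, so all
infinitesimal neighbourhoods of a point `x` factor through `u`, and since morphisms from the
spectrum of a complete local ring are determined by these neighbourhoods, so does
`Spec 𝒪̂_{X,x} ⟶ X`. Hence `Spec 𝒪̂_{X,x} ⟶ X` is a closed section, which says that the diagonal of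
`f` becomes closed after pulling back along the flat morphism `Spec 𝒪̂_{X,x} ×_S X ⟶ X ×_S X`.
Generizations lift along flat morphisms, and these morphisms jointly cover `X ×_S X`, so the
diagonal is stable under specialization; as it is quasi-compact, it is closed. -/

universe u

section ClosedSections

variable {X S T : Scheme.{u}}

lemma isClosedSectionOver_comp_iff (f : X ⟶ S) (h : T ⟶ X) :
    IsClosedSectionOver f (h ≫ f) h ↔
      IsClosedImmersion (pullback.lift (f := h ≫ f) (g := f) (𝟙 T) h (Category.id_comp _)) := by
  have swap (w : h ≫ f = 𝟙 T ≫ h ≫ f) : pullback.lift h (𝟙 T) w =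
      pullback.lift (𝟙 T) h w.symm ≫ (pullbackSymmetry (h ≫ f) f).hom := by
    apply pullback.hom_ext
    · rw [Category.assoc, pullbackSymmetry_hom_comp_fst, pullback.lift_fst, pullback.lift_snd]
    · rw [Category.assoc, pullbackSymmetry_hom_comp_snd, pullback.lift_fst, pullback.lift_snd]
  simp only [IsClosedSectionOver, swap, Category.id_comp, exists_true_left,
    MorphismProperty.cancel_right_of_respectsIso @IsClosedImmersion]

lemma isClosedSectionOver_of_isSeparated (f : X ⟶ S) [IsSeparated f] (h : T ⟶ X) :
    IsClosedSectionOver f (h ≫ f) h :=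
  (isClosedSectionOver_comp_iff f h).mpr inferInstance

lemma IsClosedSectionOver.comp_eq {f : X ⟶ S} {g : T ⟶ S} {h : T ⟶ X}
    (hh : IsClosedSectionOver f g h) : h ≫ f = g :=
  hh.choose.trans (Category.id_comp g)

lemma isClosedImmersion_of_section_of_discreteTopology {Y : Scheme.{u}} [DiscreteTopology T]
    (s : T ⟶ Y) (p : Y ⟶ T) (hsp : s ≫ p = 𝟙 T) : IsClosedImmersion s := by
  rw [IsZariskiLocalAtTarget.iff_of_iSup_eq_top (P := @IsClosedImmersion) _
    (iSup_affineOpens_eq_top Y)]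
  -- The projection `p` need not be separated, but its restriction to an affine open is.
  intro U
  have : IsAffine U := U.2
  have : IsClosedImmersion (s ⁻¹ᵁ U.1).ι := .of_isPreimmersion _ (isClosed_discrete _)
  have restrict_comp : (s ∣_ U.1) ≫ U.1.ι ≫ p = (s ⁻¹ᵁ U.1).ι := by
    rw [morphismRestrict_ι_assoc, hsp, Category.comp_id]
  have : IsClosedImmersion ((s ∣_ U.1) ≫ U.1.ι ≫ p) := by rwa [restrict_comp]
  exact .of_comp (s ∣_ U.1) (U.1.ι ≫ p)

lemma isClosedSectionOver_of_discreteTopology [DiscreteTopology T] (f : X ⟶ S) (h : T ⟶ X) :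
    IsClosedSectionOver f (h ≫ f) h :=
  (isClosedSectionOver_comp_iff f h).mpr <|
    isClosedImmersion_of_section_of_discreteTopology _ (pullback.fst (h ≫ f) f)
      (pullback.lift_fst _ _ _)

end ClosedSections

section FlatTests

lemma mem_of_specializes_of_generalizingMap {Y Z : Type*} [TopologicalSpace Y]
    [TopologicalSpace Z] {q : Z → Y} (hq : GeneralizingMap q) {s : Set Y}
    (hs : IsClosed (q ⁻¹' s)) {y : Y} {z : Z} (hyz : y ⤳ q z) (hy : y ∈ s) : q z ∈ s := by
  obtain ⟨d, hdz, rfl⟩ := hq hyz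
  exact hdz.mem_closed hs hy

variable {X S T : Scheme.{u}}

lemma preimage_range_diagonal_eq_range_lift (f : X ⟶ S) (h : T ⟶ X) :
    pullback.map (h ≫ f) f f f h (𝟙 X) (𝟙 S) (by simp) (by simp) ⁻¹'
        Set.range (pullback.diagonal f) =
      Set.range (pullback.lift (f := h ≫ f) (g := f) (𝟙 T) h (Category.id_comp _)) := by
  simpa using (Scheme.image_preimage_eq_of_isPullback
    (pullback_lift_diagonal_isPullback h f) Set.univ).symm

lemma flat_pullbackMap (f : X ⟶ S) (h : T ⟶ X) [Flat h] :
    Flat (pullback.map (h ≫ f) f f f h (𝟙 X) (𝟙 S) (by simp) (by simp)) :=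
  MorphismProperty.pullbackMap (P := @Flat) ‹_› inferInstance rfl (Category.id_comp f).symm

lemma isSeparated_of_flat_closedSections (f : X ⟶ S) [QuasiSeparated f]
    (tests : ∀ x : X, ∃ (T : Scheme.{u}) (h : T ⟶ X),
      Flat h ∧ x ∈ Set.range h ∧ IsClosedSectionOver f (h ≫ f) h) : IsSeparated f := by
  have stable : StableUnderSpecialization (Set.range (pullback.diagonal f)) := by
    intro y z hyz hy
    obtain ⟨T, h, _, hz, hclosed⟩ := tests (pullback.fst f f z)
    have := (isClosedSectionOver_comp_iff f h).mp hclosed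
    let q := pullback.map (h ≫ f) f f f h (𝟙 X) (𝟙 S) (by simp) (by simp)
    have : Flat q := flat_pullbackMap f h
    obtain ⟨z', rfl⟩ : z ∈ Set.range q := by
      rw [Scheme.Pullback.range_map]
      exact ⟨hz, by simp⟩
    refine mem_of_specializes_of_generalizingMap (Flat.generalizingMap q) ?_ hyz hy
    rw [preimage_range_diagonal_eq_range_lift]
    exact (Scheme.Hom.isClosedEmbedding _).isClosed_range
  have specializing := (pullback.diagonal f).isEmbedding.isInducing.specializingMap stable
  exact ⟨.of_isPreimmersion _ ((isClosedMap_iff_specializingMap _).mpr specializing).isClosed_range⟩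

end FlatTests

section FormalDeformations

open IsLocalRing

lemma exists_specMap_comp_fromSpec_eq {X : Scheme.{u}} {U : X.Opens} (hU : IsAffineOpen U)
    {R : CommRingCat.{u}} (c : Spec R ⟶ X) (hc : Set.range c ⊆ U) :
    ∃ φ : Γ(X, U) ⟶ R, Spec.map φ ≫ hU.fromSpec = c :=
  ⟨Spec.preimage (IsOpenImmersion.lift hU.fromSpec c (by rwa [hU.range_fromSpec])), by simp⟩

lemma range_subset_of_closedPoint_mem {X : Scheme.{u}} {R : CommRingCat.{u}} [IsLocalRing R]
    (c : Spec R ⟶ X) {U : X.Opens} (hU : c (closedPoint R) ∈ U) : Set.range c ⊆ U := by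
  rintro _ ⟨y, rfl⟩
  exact ((specializes_closedPoint y).map c.continuous).mem_open U.2 hU

variable (R : CommRingCat.{u}) [IsLocalRing R]

/-- The infinitesimal thickening `Spec (R ⧸ 𝔪ⁿ)` of the closed point of the spectrum of a local
ring `R`; it is empty for `n = 0`. -/
noncomputable abbrev thickening (n : ℕ) : Scheme.{u} := Spec (.of (R ⧸ maximalIdeal R ^ n))

/-- The closed immersion of the `n`-th thickening of the closed point into `Spec R`. -/
noncomputable def thickeningι (n : ℕ) : thickening R n ⟶ Spec R :=
  Spec.map (CommRingCat.ofHom (Ideal.Quotient.mk (maximalIdeal R ^ n)))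

/-- The transition morphism of the formal spectrum of `R`, viewed as the direct system of its
thickenings. -/
noncomputable def thickeningMap {m n : ℕ} (hmn : m ≤ n) : thickening R m ⟶ thickening R n :=
  Spec.map (CommRingCat.ofHom (Ideal.Quotient.factorPow (maximalIdeal R) hmn))

lemma thickeningMap_comp_thickeningι {m n : ℕ} (hmn : m ≤ n) :
    thickeningMap R hmn ≫ thickeningι R n = thickeningι R m := by
  rw [thickeningMap, thickeningι, ← Spec.map_comp]
  rfl

lemma thickeningι_apply (n : ℕ) (p : thickening R n) : thickeningι R n p = closedPoint R := by
  let mk := Ideal.Quotient.mk (maximalIdeal R ^ n)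
  have : (p.asIdeal.comap mk).IsPrime := p.2.comap _
  have pow_le : maximalIdeal R ^ n ≤ p.asIdeal.comap mk := fun a ha => by
    rw [Ideal.mem_comap, Ideal.Quotient.eq_zero_iff_mem.mpr ha]
    exact zero_mem _
  exact PrimeSpectrum.ext ((maximalIdeal.isMaximal R).eq_of_le Ideal.IsPrime.ne_top'
    (Ideal.IsPrime.le_of_pow_le pow_le)).symm

instance subsingleton_thickening (n : ℕ) : Subsingleton (thickening R n) where
  allEq p q := PrimeSpectrum.comap_injective_of_surjective _ Ideal.Quotient.mk_surjective
    ((thickeningι_apply R n p).trans (thickeningι_apply R n q).symm)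

instance nonempty_thickening_one : Nonempty (thickening R 1) := by
  have : Nontrivial (R ⧸ maximalIdeal R ^ 1) := by rw [pow_one]; infer_instance
  exact inferInstanceAs (Nonempty (PrimeSpectrum _))

variable {R} {H : Scheme.{u}}

lemma specHom_ext_of_thickeningι [IsHausdorff (maximalIdeal R) R] {a b : Spec R ⟶ H}
    (hab : ∀ n, thickeningι R n ≫ a = thickeningι R n ≫ b) : a = b := by
  have closedPoint_eq : a (closedPoint R) = b (closedPoint R) := by
    obtain ⟨p⟩ := nonempty_thickening_one R
    simpa [thickeningι_apply] using congr($(hab 1) p)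
  obtain ⟨U, hU, haU, -⟩ :=
    exists_isAffineOpen_mem_and_subset (x := a (closedPoint R)) (U := ⊤) trivial
  obtain ⟨α, rfl⟩ := exists_specMap_comp_fromSpec_eq hU a (range_subset_of_closedPoint_mem a haU)
  obtain ⟨β, rfl⟩ := exists_specMap_comp_fromSpec_eq hU b
    (range_subset_of_closedPoint_mem b (closedPoint_eq ▸ haU))
  have congr_mod_pow (n : ℕ) : α ≫ CommRingCat.ofHom (Ideal.Quotient.mk (maximalIdeal R ^ n)) =
      β ≫ CommRingCat.ofHom (Ideal.Quotient.mk (maximalIdeal R ^ n)) := by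
    apply Spec.map_injective
    simpa [thickeningι, ← cancel_mono hU.fromSpec] using hab n
  have : α = β := by
    ext x
    refine congrFun (IsHausdorff.funext' (maximalIdeal R) fun n y => ?_) x
    exact congr($(congr_mod_pow n) y)
  rw [this]

lemma exists_specHom_of_thickening [IsAdicComplete (maximalIdeal R) R]
    (h : ∀ n, thickening R n ⟶ H)
    (compat : ∀ {m n : ℕ} (hmn : m ≤ n), thickeningMap R hmn ≫ h n = h m) :
    ∃ k : Spec R ⟶ H, ∀ n, thickeningι R n ≫ k = h n := by
  obtain ⟨p⟩ := nonempty_thickening_one R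
  obtain ⟨U, hU, hpU, -⟩ := exists_isAffineOpen_mem_and_subset (x := h 1 p) (U := ⊤) trivial
  have apply_eq_of_le {m n : ℕ} (hmn : m ≤ n) (y : thickening R m) (z : thickening R n) :
      h m y = h n z := by
    rw [← compat hmn, Scheme.Hom.comp_apply, Subsingleton.elim (thickeningMap R hmn y) z]
  have range_subset (n : ℕ) : Set.range (h n) ⊆ U := by
    rintro _ ⟨y, rfl⟩
    rcases le_total n 1 with hn | hn
    · rwa [SetLike.mem_coe, apply_eq_of_le hn y p]
    · rwa [SetLike.mem_coe, ← apply_eq_of_le hn p y]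
  choose φ hφ using fun n => exists_specMap_comp_fromSpec_eq hU (h n) (range_subset n)
  have φ_compat {m n : ℕ} (hmn : m ≤ n) :
      (Ideal.Quotient.factorPow (maximalIdeal R) hmn).comp (φ n).hom = (φ m).hom := by
    suffices φ n ≫ CommRingCat.ofHom (Ideal.Quotient.factorPow (maximalIdeal R) hmn) = φ m from
      congr($(this).hom)
    apply Spec.map_injective
    rw [← cancel_mono hU.fromSpec, Spec.map_comp, Category.assoc, hφ, hφ]
    exact compat hmn
  let Φ : Γ(H, U) ⟶ R :=
    CommRingCat.ofHom (IsAdicComplete.liftRingHom (maximalIdeal R) (fun n => (φ n).hom) φ_compat)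
  refine ⟨Spec.map Φ ≫ hU.fromSpec, fun n => ?_⟩
  have Φ_mod_pow : Φ ≫ CommRingCat.ofHom (Ideal.Quotient.mk (maximalIdeal R ^ n)) = φ n := by
    ext x
    exact IsAdicComplete.mk_liftRingHom _ _ φ_compat n x
  rw [thickeningι, ← Spec.map_comp_assoc, Φ_mod_pow, hφ]

end FormalDeformations

section Completions

open IsLocalRing

lemma flat_fromSpecStalk (X : Scheme.{u}) (x : X) : Flat (X.fromSpecStalk x) := by
  obtain ⟨U, hU, hxU, -⟩ := exists_isAffineOpen_mem_and_subset (x := x) (U := ⊤) trivial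
  have : Flat (Spec.map (X.presheaf.germ U x hxU)) := by
    rw [Flat.SpecMap_iff]
    let := X.presheaf.algebra_section_stalk ⟨x, hxU⟩
    have := hU.isLocalization_stalk ⟨x, hxU⟩
    exact RingHom.flat_algebraMap_iff.mpr
      (IsLocalization.flat _ (hU.primeIdealOf ⟨x, hxU⟩).asIdeal.primeCompl)
  rw [← hU.fromSpecStalk_eq_fromSpecStalk hxU, IsAffineOpen.fromSpecStalk]
  infer_instance

/-- The completion `𝒪̂_{X,x}` of the local ring of `X` at `x`. -/
noncomputable abbrev completedStalk (X : Scheme.{u}) (x : X) : CommRingCat.{u} :=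
  .of (AdicCompletion (maximalIdeal (X.presheaf.stalk x)) (X.presheaf.stalk x))

/-- The canonical morphism `Spec 𝒪̂_{X,x} ⟶ X`. -/
noncomputable def fromSpecCompletedStalk (X : Scheme.{u}) (x : X) :
    Spec (completedStalk X x) ⟶ X :=
  Spec.map (CommRingCat.ofHom (algebraMap (X.presheaf.stalk x) (completedStalk X x))) ≫
    X.fromSpecStalk x

variable (X : Scheme.{u}) (x : X) [IsNoetherianRing (X.presheaf.stalk x)]

lemma flat_fromSpecCompletedStalk : Flat (fromSpecCompletedStalk X x) := by
  have := flat_fromSpecStalk X x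
  have : Flat (Spec.map (CommRingCat.ofHom
      (algebraMap (X.presheaf.stalk x) (completedStalk X x)))) := by
    rw [Flat.SpecMap_iff]
    exact RingHom.flat_algebraMap_iff.mpr inferInstance
  rw [fromSpecCompletedStalk]
  infer_instance

lemma fromSpecCompletedStalk_closedPoint :
    fromSpecCompletedStalk X x (closedPoint (completedStalk X x)) = x := by
  let toCompletion : X.presheaf.stalk x ⟶ completedStalk X x :=
    CommRingCat.ofHom (algebraMap (X.presheaf.stalk x) (completedStalk X x))
  have : IsLocalHom toCompletion.hom :=
    inferInstanceAs (IsLocalHom (algebraMap (X.presheaf.stalk x) (completedStalk X x)))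
  exact (congrArg (X.fromSpecStalk x) (Spec_closedPoint (f := toCompletion))).trans
    Scheme.fromSpecStalk_closedPoint

end Completions

section Representability

/-- The morphism `u : H ⟶ X` exhibits `H` as representing `Hilb¹_X`: it is the universal closed
section, so that a `T`-valued point of `X` is a closed section exactly when it factors, necessarily
uniquely, through `u`. Since `h : T ⟶ X` determines the structure morphism `h ≫ f`, it suffices to
quantify over schemes `T` rather than over schemes over `S`. -/
structure RepresentsHilbOne {X S H : Scheme.{u}} (f : X ⟶ S) (u : H ⟶ X) : Prop where
  mono : Mono u
  isClosedSectionOver_iff : ∀ {T : Scheme.{u}} (h : T ⟶ X),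
    IsClosedSectionOver f (h ≫ f) h ↔ ∃ k : T ⟶ H, k ≫ u = h

lemma RepresentsHilbOne.isClosedSectionOver_of_isAdicComplete {X S H : Scheme.{u}} {f : X ⟶ S}
    {u : H ⟶ X} (hu : RepresentsHilbOne f u) {R : CommRingCat.{u}} [IsLocalRing R]
    [IsAdicComplete (IsLocalRing.maximalIdeal R) R] (c : Spec R ⟶ X) :
    IsClosedSectionOver f (c ≫ f) c := by
  have := hu.mono
  choose h hh using fun n => (hu.isClosedSectionOver_iff (thickeningι R n ≫ c)).mp
    (isClosedSectionOver_of_discreteTopology f _)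
  obtain ⟨k, hk⟩ := exists_specHom_of_thickening h fun hmn => by
    rw [← cancel_mono u, Category.assoc, hh, hh, ← Category.assoc, thickeningMap_comp_thickeningι]
  refine (hu.isClosedSectionOver_iff c).mpr ⟨k, specHom_ext_of_thickeningι fun n => ?_⟩
  rw [← Category.assoc, hk, hh]

lemma RepresentsHilbOne.isSeparated {X S H : Scheme.{u}} {f : X ⟶ S} [QuasiSeparated f]
    [∀ x : X, IsNoetherianRing (X.presheaf.stalk x)] {u : H ⟶ X} (hu : RepresentsHilbOne f u) :
    IsSeparated f :=
  isSeparated_of_flat_closedSections f fun x => ⟨_, fromSpecCompletedStalk X x,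
    flat_fromSpecCompletedStalk X x, ⟨_, fromSpecCompletedStalk_closedPoint X x⟩,
    hu.isClosedSectionOver_of_isAdicComplete _⟩

variable {X S : Scheme} {f : X ⟶ S}

lemma representsHilbOne_of_natural_equiv {H : Over S} (e : ∀ T : Over S, (T ⟶ H) ≃ Hilb1Set f T)
    (he : ∀ (T T' : Over S) (u : T' ⟶ T) (k : T ⟶ H),
      ((e T') (u ≫ k)).1 = u.left ≫ ((e T) k).1) :
    RepresentsHilbOne f (e H (𝟙 H)).1 := by
  set u := (e H (𝟙 H)).1
  have e_apply {T : Over S} (k : T ⟶ H) : (e T k).1 = k.left ≫ u := by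
    simpa using he _ _ k (𝟙 H)
  have u_comp : u ≫ f = H.hom := (e H (𝟙 H)).2.comp_eq
  refine ⟨⟨fun {Z} a b hab => ?_⟩, fun {T} h => ⟨fun hh => ?_, ?_⟩⟩
  · let a' : Over.mk (a ≫ H.hom) ⟶ H := Over.homMk a
    let b' : Over.mk (a ≫ H.hom) ⟶ H := Over.homMk b (by simp [← u_comp, reassoc_of% hab])
    have : a' = b' := (e _).injective (Subtype.ext (by rw [e_apply, e_apply]; exact hab))
    exact congr($(this).left)
  · let k := (e (Over.mk (h ≫ f))).symm ⟨h, hh⟩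
    exact ⟨k.left, (e_apply k).symm.trans (congrArg Subtype.val (Equiv.apply_symm_apply _ _))⟩
  · rintro ⟨k, rfl⟩
    have := (e (Over.mk ((k ≫ u) ≫ f)) (Over.homMk k (by simp [u_comp]))).2
    rwa [e_apply] at this

lemma exists_natural_equiv_of_isSeparated [IsSeparated f] :
    ∃ e : ∀ T : Over S, (T ⟶ Over.mk f) ≃ Hilb1Set f T,
      ∀ (T T' : Over S) (u : T' ⟶ T) (k : T ⟶ Over.mk f),
        ((e T') (u ≫ k)).1 = u.left ≫ ((e T) k).1 :=
  ⟨fun T =>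
    { toFun k := ⟨k.left, Over.w k ▸ isClosedSectionOver_of_isSeparated f k.left⟩
      invFun h := Over.homMk h.1 h.2.comp_eq },
    fun _ _ _ _ => rfl⟩

theorem hilbOne_representable_iff_separated_general (f : X ⟶ S) [QuasiSeparated f]
    [∀ x : X, IsNoetherianRing (X.presheaf.stalk x)] :
    ((∃ (H : Over S) (e : ∀ T : Over S, (T ⟶ H) ≃ Hilb1Set f T),
        ∀ (T T' : Over S) (u : T' ⟶ T) (k : T ⟶ H),
          ((e T') (u ≫ k)).1 = u.left ≫ ((e T) k).1) ↔ IsSeparated f) ∧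
    (IsSeparated f →
      ∃ e : ∀ T : Over S, (T ⟶ Over.mk f) ≃ Hilb1Set f T,
        ∀ (T T' : Over S) (u : T' ⟶ T) (k : T ⟶ Over.mk f),
          ((e T') (u ≫ k)).1 = u.left ≫ ((e T) k).1) := by
  refine ⟨⟨?_, fun _ => ⟨Over.mk f, exists_natural_equiv_of_isSeparated⟩⟩,
    fun _ => exists_natural_equiv_of_isSeparated⟩
  rintro ⟨H, e, he⟩
  exact (representsHilbOne_of_natural_equiv e he).isSeparated

end Representability

/-- For `f : X ⟶ S` locally of finite type with `S` locally Noetherian, the Hilbert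
functor `Hilb¹_X` is representable by a scheme if and only if `f` is separated, and in
the separated case it is represented by `X` itself. -/
theorem hilbOne_representable_iff_separated
    {X S : Scheme} (f : X ⟶ S) [LocallyOfFiniteType f] [IsLocallyNoetherian S] :
    ((∃ (H : Over S) (e : ∀ T : Over S, (T ⟶ H) ≃ Hilb1Set f T),
        ∀ (T T' : Over S) (u : T' ⟶ T) (k : T ⟶ H),
          ((e T') (u ≫ k)).1 = u.left ≫ ((e T) k).1) ↔ IsSeparated f) ∧
    (IsSeparated f →
      ∃ e : ∀ T : Over S, (T ⟶ Over.mk f) ≃ Hilb1Set f T,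
        ∀ (T T' : Over S) (u : T' ⟶ T) (k : T ⟶ Over.mk f),
          ((e T') (u ≫ k)).1 = u.left ≫ ((e T) k).1) := by
  have : IsLocallyNoetherian X := LocallyOfFiniteType.isLocallyNoetherian f
  exact hilbOne_representable_iff_separated_general f
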